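/- arXiv:2506.08242 — 4 statements merged into one kernel-verified Lean document; each statement's English description precedes it below -/
import Mathlib

section
/- Let u be a pair potential that is stable with constant B ≥ 0 and regular. Then for every bounded measurable set Λ ⊂ ℝ^d and every z ∈ ℂ with |z| < z₀, the grand canonical partition function satisfies Ξ_Λ(z) ≠ 0. -/
open MeasureTheory Bornology

noncomputable section

/-- Boltzmann factor `e^{-β t}` with the convention `e^{-β(+∞)} = 0`. -/
def boltz (β : ℝ) (t : EReal) : ℝ :=
  if t = ⊤ then 0 else Real.exp (-β * t.toReal)

/-- Hamiltonian of a pair potential: `H(x₁,…,xₙ) = ∑_{i<j} u(xᵢ - xⱼ)`. -/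
def Ham {d : ℕ} (u : (Fin d → ℝ) → EReal) (n : ℕ) (x : Fin n → (Fin d → ℝ)) : EReal :=
  ∑ p ∈ Finset.univ.filter (fun p : Fin n × Fin n => p.1 < p.2), u (x p.1 - x p.2)

/-- A pair potential: even, measurable, bounded from below. -/
def IsPairPotential {d : ℕ} (u : (Fin d → ℝ) → EReal) : Prop :=
  Measurable u ∧ (∀ x, u (-x) = u x) ∧ ∃ m : ℝ, ∀ x, (m : EReal) ≤ u x

/-- Stability with constant `B`: `H(x₁,…,xₙ) ≥ -Bn`. -/
def IsStable {d : ℕ} (u : (Fin d → ℝ) → EReal) (B : ℝ) : Prop :=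
  ∀ (n : ℕ) (x : Fin n → (Fin d → ℝ)), ((-(B * n) : ℝ) : EReal) ≤ Ham u n x

/-- Mayer function `f_β = e^{-βu} - 1`. -/
def mayer {d : ℕ} (β : ℝ) (u : (Fin d → ℝ) → EReal) (x : Fin d → ℝ) : ℝ :=
  boltz β (u x) - 1

/-- Regularity: the Mayer function is integrable. -/
def IsRegularPP {d : ℕ} (β : ℝ) (u : (Fin d → ℝ) → EReal) : Prop :=
  Integrable (mayer β u)

/-- `C_β(u) = ∫ |e^{-βu} - 1|`. -/
def Creg {d : ℕ} (β : ℝ) (u : (Fin d → ℝ) → EReal) : ℝ :=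
  ∫ x, |mayer β u x|

/-- The cartesian power `Λ^k`. -/
def cube {d : ℕ} (Λ : Set (Fin d → ℝ)) (k : ℕ) : Set (Fin k → (Fin d → ℝ)) :=
  Set.univ.pi fun _ => Λ

/-- Grand canonical partition function `Ξ_Λ(z)`. -/
def Xi {d : ℕ} (β : ℝ) (u : (Fin d → ℝ) → EReal) (Λ : Set (Fin d → ℝ)) (z : ℂ) : ℂ :=
  ∑' k : ℕ, z ^ k / (Nat.factorial k : ℂ) *
    ((∫ y in cube Λ k, boltz β (Ham u k y) : ℝ) : ℂ)

/-- `θ_Λ^{(n)}(z; x₁,…,xₙ)`. -/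
def theta {d : ℕ} (β : ℝ) (u : (Fin d → ℝ) → EReal) (Λ : Set (Fin d → ℝ)) (n : ℕ)
    (z : ℂ) (x : Fin n → (Fin d → ℝ)) : ℂ :=
  (Xi β u Λ z)⁻¹ * ∑' k : ℕ, z ^ (n + k) / (Nat.factorial k : ℂ) *
    ((∫ y in cube Λ k, boltz β (Ham u (n + k) (Fin.append x y)) : ℝ) : ℂ)

end

section abstractPart

variable {X : Type*} [MeasurableSpace X]

noncomputable def Dop (μ : Measure X) (f : X → ℂ) (g : List X → ℂ) : List X → ℂ :=
  fun s => ∫ y, f y * g (y :: s) ∂μ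

structure NiceF (f : X → ℂ) (F : ℝ) : Prop where
  meas : Measurable f
  bdd : ∀ x, ‖f x‖ ≤ F

structure NiceG (g : List X → ℂ) : Prop where
  perm : ∀ s t : List X, s.Perm t → g s = g t
  meas : ∀ k : ℕ, Measurable (fun v : Fin k → X => g (List.ofFn v))
  bdd : ∃ c : ℕ → ℝ, ∀ s, ‖g s‖ ≤ c s.length

theorem NiceG.add {g h : List X → ℂ} (hg : NiceG g) (hh : NiceG h) : NiceG (g + h) := by
  obtain ⟨c, hc⟩ := hg.bdd
  obtain ⟨c', hc'⟩ := hh.bdd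
  refine ⟨fun s t hst => ?_, fun k => (hg.meas k).add (hh.meas k), c + c', fun s => ?_⟩
  · simp [hg.perm s t hst, hh.perm s t hst]
  · exact (norm_add_le _ _).trans (add_le_add (hc s) (hc' s))

theorem NiceG.smul {g : List X → ℂ} (a : ℂ) (hg : NiceG g) : NiceG (a • g) := by
  obtain ⟨c, hc⟩ := hg.bdd
  refine ⟨fun s t hst => ?_, fun k => (hg.meas k).const_smul a, fun k => ‖a‖ * c k, fun s => ?_⟩
  · simp [hg.perm s t hst]
  · simp only [Pi.smul_apply, smul_eq_mul, norm_mul]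
    exact mul_le_mul_of_nonneg_left (hc s) (norm_nonneg _)

theorem NiceG.meas2 {g : List X → ℂ} (hg : NiceG g) (k : ℕ) :
    Measurable (fun p : X × (Fin k → X) => g (p.1 :: List.ofFn p.2)) := by
  have h : Measurable (fun p : X × (Fin k → X) => (Fin.cons p.1 p.2 : Fin (k+1) → X)) := by
    refine measurable_pi_iff.2 fun i => ?_
    refine Fin.cases ?_ (fun j => ?_) i
    · simpa using measurable_fst
    · simpa [Function.comp_def] using (measurable_pi_apply j).comp measurable_snd
  have := (hg.meas (k+1)).comp h
  simpa [Function.comp_def, List.ofFn_cons] using this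

theorem NiceG.meas3 {g : List X → ℂ} (hg : NiceG g) (s : List X) :
    Measurable (fun y : X => g (y :: s)) := by
  have h := (hg.meas2 s.length).comp
    (measurable_id.prodMk (measurable_const (a := s.get)))
  simpa [Function.comp_def] using h

theorem NiceG.meas4 {g : List X → ℂ} (hg : NiceG g) (s : List X) :
    Measurable (fun p : X × X => g (p.2 :: p.1 :: s)) := by
  have h : Measurable (fun p : X × X => (p.2, (Fin.cons p.1 s.get : Fin (s.length+1) → X))) := by
    refine measurable_snd.prodMk (measurable_pi_iff.2 fun i => ?_)
    refine Fin.cases ?_ (fun j => ?_) i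
    · simpa using measurable_fst
    · simp
  have h := (hg.meas2 (s.length+1)).comp h
  simpa [Function.comp_def, List.ofFn_cons] using h

variable (μ : Measure X) [IsFiniteMeasure μ]

theorem NiceG.int {g : List X → ℂ} (hg : NiceG g) {f : X → ℂ} {F : ℝ} (hf : NiceF f F)
    (s : List X) : Integrable (fun y => f y * g (y :: s)) μ := by
  obtain ⟨c, hc⟩ := hg.bdd
  refine Integrable.of_bound (hf.meas.mul (hg.meas3 s)).aestronglyMeasurable
    (F * c (s.length+1)) (Filter.Eventually.of_forall fun y => ?_)
  rw [norm_mul]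
  exact mul_le_mul (hf.bdd y) (hc (y::s)) (norm_nonneg _) ((norm_nonneg _).trans (hf.bdd y))

theorem NiceG.dop {g : List X → ℂ} (hg : NiceG g) {f : X → ℂ} {F : ℝ} (hf : NiceF f F) :
    NiceG (Dop μ f g) := by
  obtain ⟨c, hc⟩ := hg.bdd
  refine ⟨fun s t hst => ?_, fun k => ?_, fun k => F * c (k+1) * μ.real Set.univ, fun s => ?_⟩
  · unfold Dop
    congr 1
    ext y
    rw [hg.perm _ _ (hst.cons y)]
  · unfold Dop
    have h : Measurable (fun p : (Fin k → X) × X => f p.2 * g (p.2 :: List.ofFn p.1)) :=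
      (hf.meas.comp measurable_snd).mul ((hg.meas2 k).comp measurable_swap)
    exact h.stronglyMeasurable.integral_prod_right'.measurable
  · unfold Dop
    refine norm_integral_le_of_norm_le_const (Filter.Eventually.of_forall fun y => ?_)
    rw [norm_mul]
    exact mul_le_mul (hf.bdd y) (hc (y::s)) (norm_nonneg _) ((norm_nonneg _).trans (hf.bdd y))

theorem dop_bound {g : List X → ℂ} {f : X → ℂ} {F : ℝ} (hf : NiceF f F) {c A : ℝ}
    (hg : ∀ s, ‖g s‖ ≤ c * A ^ s.length) (s : List X) :
    ‖Dop μ f g s‖ ≤ (F * μ.real Set.univ * A * c) * A ^ s.length := by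
  have : ‖Dop μ f g s‖ ≤ (F * (c * A ^ (s.length + 1))) * μ.real Set.univ := by
    refine norm_integral_le_of_norm_le_const (Filter.Eventually.of_forall fun y => ?_)
    rw [norm_mul]
    exact mul_le_mul (hf.bdd y) (hg (y::s)) (norm_nonneg _) ((norm_nonneg _).trans (hf.bdd y))
  refine this.trans (le_of_eq ?_)
  ring

theorem dop_iter_bound {g : List X → ℂ} {f : X → ℂ} {F : ℝ} (hf : NiceF f F) {c A : ℝ}
    (hg : ∀ s, ‖g s‖ ≤ c * A ^ s.length) (m : ℕ) (s : List X) :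
    ‖(Dop μ f)^[m] g s‖ ≤ ((F * μ.real Set.univ * A) ^ m * c) * A ^ s.length := by
  induction m generalizing s with
  | zero => simpa using hg s
  | succ m ih =>
    rw [Function.iterate_succ_apply']
    refine (dop_bound μ hf ih s).trans (le_of_eq ?_)
    ring

theorem NiceG.iter {g : List X → ℂ} (hg : NiceG g) {f : X → ℂ} {F : ℝ} (hf : NiceF f F) (m : ℕ) :
    NiceG ((Dop μ f)^[m] g) := by
  induction m with
  | zero => simpa
  | succ m ih =>
    rw [Function.iterate_succ_apply']
    exact ih.dop μ hf

theorem dop_comm {g : List X → ℂ} (hg : NiceG g) {f h : X → ℂ} {F H : ℝ} (hf : NiceF f F)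
    (hh : NiceF h H) : Dop μ f (Dop μ h g) = Dop μ h (Dop μ f g) := by
  ext s
  obtain ⟨c, hc⟩ := hg.bdd
  unfold Dop
  simp_rw [← integral_const_mul]
  rw [integral_integral_swap]
  · congr 1
    ext y
    congr 1
    ext x
    rw [hg.perm _ _ (List.Perm.swap x y s)]
    ring
  · refine Integrable.of_bound (C := F * (H * c (s.length + 1 + 1))) ?_ ?_
    · exact ((hf.meas.comp measurable_fst).mul ((hh.meas.comp measurable_snd).mul
        (hg.meas4 s))).aestronglyMeasurable
    · refine Filter.Eventually.of_forall fun p => ?_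
      simp only [Function.uncurry, norm_mul]
      refine mul_le_mul (hf.bdd _) (mul_le_mul (hh.bdd _) (hc (p.2 :: p.1 :: s)) (norm_nonneg _)
        ((norm_nonneg _).trans (hh.bdd p.1))) (by positivity) ((norm_nonneg _).trans (hf.bdd p.1))

def niceSub (X : Type*) [MeasurableSpace X] : Submodule ℂ (List X → ℂ) where
  carrier := {g | NiceG g}
  add_mem' := fun ha hb => NiceG.add ha hb
  zero_mem' := ⟨fun _ _ _ => rfl, fun _ => measurable_const, 0, fun s => by simp⟩
  smul_mem' := fun c _ hg => NiceG.smul c hg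

noncomputable def Dend {f : X → ℂ} {F : ℝ} (hf : NiceF f F) : Module.End ℂ (niceSub X) where
  toFun g := ⟨Dop μ f g.1, NiceG.dop μ g.2 hf⟩
  map_add' g h := by
    apply Subtype.ext
    ext s
    simp only [Dop, Submodule.coe_add, Pi.add_apply, mul_add]
    exact integral_add (NiceG.int μ g.2 hf s) (NiceG.int μ h.2 hf s)
  map_smul' a g := by
    apply Subtype.ext
    ext s
    simp only [Dop, Submodule.coe_smul, Pi.smul_apply, smul_eq_mul, RingHom.id_apply]
    rw [← integral_const_mul]
    congr 1
    ext y
    ring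

theorem Dend_pow {f : X → ℂ} {F : ℝ} (hf : NiceF f F) (m : ℕ) (g : niceSub X) :
    ((Dend μ hf ^ m) g).1 = (Dop μ f)^[m] g.1 := by
  induction m with
  | zero => simp
  | succ m ih =>
    rw [pow_succ', Function.iterate_succ_apply', ← ih]
    rfl

theorem NiceF.one : NiceF (fun _ : X => (1:ℂ)) 1 := ⟨measurable_const, by simp⟩

theorem NiceF.oneAdd {f : X → ℂ} {F : ℝ} (hf : NiceF f F) : NiceF (fun x => 1 + f x) (1 + F) :=
  ⟨measurable_const.add hf.meas, fun x => (norm_add_le _ _).trans (by simpa using hf.bdd x)⟩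

theorem dop_binom {g : List X → ℂ} (hg : NiceG g) {f : X → ℂ} {F : ℝ} (hf : NiceF f F) (k : ℕ)
    (s : List X) :
    (Dop μ (fun x => 1 + f x))^[k] g s = ∑ p ∈ Finset.HasAntidiagonal.antidiagonal k,
      (k.choose p.1 : ℂ) * (Dop μ f)^[p.1] ((Dop μ (fun _ => 1))^[p.2] g) s := by
  have hsum : Dend μ hf.oneAdd = Dend μ hf + Dend μ (NiceF.one (X := X)) := by
    ext g s
    simp only [Dend, LinearMap.coe_mk, AddHom.coe_mk, LinearMap.add_apply, Submodule.coe_add,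
      Pi.add_apply, Dop]
    rw [← integral_add (NiceG.int μ g.2 hf s) (NiceG.int μ g.2 NiceF.one s)]
    congr 1
    ext y
    ring
  have hc : Commute (Dend μ hf) (Dend μ (NiceF.one (X := X))) := by
    ext g s
    exact congrFun (dop_comm μ g.2 hf NiceF.one) s
  have h := hc.add_pow' k
  rw [← hsum] at h
  have h2 := congrArg (fun T : Module.End ℂ (niceSub X) => (T ⟨g, hg⟩).1 s) h
  simp only [Dend_pow] at h2
  rw [h2]
  simp only [LinearMap.sum_apply, Submodule.coe_sum, Finset.sum_apply]
  refine Finset.sum_congr rfl fun p _ => ?_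
  rw [LinearMap.smul_apply, ← Nat.cast_smul_eq_nsmul ℂ]
  simp only [Submodule.coe_smul, Pi.smul_apply, smul_eq_mul, Module.End.mul_apply]
  rw [Dend_pow, Dend_pow]

/-- the partial resummations -/
noncomputable def Qf (f : X → ℂ) (g : List X → ℂ) (z : ℂ) (m : ℕ) (s : List X) : ℂ :=
  ∑' l : ℕ, z ^ l / (l.factorial : ℂ) * (Dop μ f)^[m] ((Dop μ (fun _ => 1))^[l] g) s

theorem G_bound {g : List X → ℂ} {f : X → ℂ} {F : ℝ} (hf : NiceF f F) {A : ℝ}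
    (hA : ∀ s, ‖g s‖ ≤ A ^ s.length) (z : ℂ) (m l : ℕ) (s : List X) :
    ‖z ^ l / (l.factorial : ℂ) * (Dop μ f)^[m] ((Dop μ (fun _ => 1))^[l] g) s‖ ≤
      ((‖z‖ * (μ.real Set.univ * A)) ^ l / l.factorial) *
        ((F * μ.real Set.univ * A) ^ m * A ^ s.length) := by
  have h1 := dop_iter_bound μ (NiceF.one (X := X)) (c := 1) (A := A) (g := g) (by simpa using hA) l
  have h2 := dop_iter_bound μ hf h1 m s
  rw [norm_mul, norm_div, norm_pow, Complex.norm_natCast]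
  refine (mul_le_mul_of_nonneg_left h2 (by positivity)).trans (le_of_eq ?_)
  rw [mul_pow]
  ring

theorem G_summable {g : List X → ℂ} {f : X → ℂ} {F : ℝ} (hf : NiceF f F) {A : ℝ}
    (hA : ∀ s, ‖g s‖ ≤ A ^ s.length) (z : ℂ) (m : ℕ) (s : List X) :
    Summable fun l : ℕ => z ^ l / (l.factorial : ℂ) *
      (Dop μ f)^[m] ((Dop μ (fun _ => 1))^[l] g) s :=
  Summable.of_norm_bounded ((Real.summable_pow_div_factorial _).mul_right _)
    (fun l => G_bound μ hf hA z m l s)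

theorem Qf_succ {g : List X → ℂ} (hg : NiceG g) {f : X → ℂ} {F : ℝ} (hf : NiceF f F) {A : ℝ}
    (hA : ∀ s, ‖g s‖ ≤ A ^ s.length) (z : ℂ) (m : ℕ) (s : List X) :
    Qf μ f g z (m+1) s = ∫ y, f y * Qf μ f g z m (y :: s) ∂μ := by
  have hn : ∀ l, NiceG ((Dop μ f)^[m] ((Dop μ (fun _ => 1))^[l] g)) := fun l =>
    (hg.iter μ NiceF.one l).iter μ hf m
  have key : ∀ y, f y * Qf μ f g z m (y :: s) = ∑' l : ℕ, z ^ l / (l.factorial : ℂ) *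
      (f y * (Dop μ f)^[m] ((Dop μ (fun _ => 1))^[l] g) (y :: s)) := by
    intro y
    unfold Qf
    rw [← tsum_mul_left]
    congr 1
    ext l
    ring
  simp_rw [key]
  rw [← integral_tsum_of_summable_integral_norm]
  · unfold Qf
    congr 1
    ext l
    rw [integral_const_mul, Function.iterate_succ_apply']
    rfl
  · intro l
    exact ((hn l).int μ hf s).const_mul _
  · refine Summable.of_nonneg_of_le (fun l => integral_nonneg fun y => norm_nonneg _) (fun l => ?_)
      ((Real.summable_pow_div_factorial (‖z‖ * (μ.real Set.univ * A))).mul_right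
        (F * ((F * μ.real Set.univ * A) ^ m * A ^ (s.length + 1)) * μ.real Set.univ))
    refine (le_abs_self _).trans ?_
    rw [← Real.norm_eq_abs]
    refine (norm_integral_le_of_norm_le_const (C := ((‖z‖ * (μ.real Set.univ * A)) ^ l / l.factorial)
      * (F * ((F * μ.real Set.univ * A) ^ m * A ^ (s.length + 1))))
      (Filter.Eventually.of_forall fun y => ?_)).trans (le_of_eq (by ring))
    have := mul_le_mul (hf.bdd y) (G_bound μ hf hA z m l (y::s)) (norm_nonneg _)
      ((norm_nonneg _).trans (hf.bdd y))
    rw [norm_norm]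
    rw [← norm_mul] at this
    refine (le_of_eq ?_).trans (this.trans (le_of_eq ?_))
    · congr 1; ring
    · simp only [List.length_cons]; ring

theorem exp_lemma {g : List X → ℂ} (hg : NiceG g) {f : X → ℂ} {F : ℝ} (hf : NiceF f F) {A : ℝ}
    (hA : ∀ s, ‖g s‖ ≤ A ^ s.length) (z : ℂ) (s : List X) :
    ∑' k : ℕ, z ^ k / (k.factorial : ℂ) * (Dop μ (fun x => 1 + f x))^[k] g s =
      ∑' m : ℕ, z ^ m / (m.factorial : ℂ) * Qf μ f g z m s := by
  let G : ℕ × ℕ → ℂ := fun p => z ^ p.1 / (p.1.factorial : ℂ) * (z ^ p.2 / (p.2.factorial : ℂ) *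
      (Dop μ f)^[p.1] ((Dop μ (fun _ => 1))^[p.2] g) s)
  have hF : ∀ x, 0 ≤ F := fun x => (norm_nonneg _).trans (hf.bdd x)
  have hG : Summable G := by
    have h1 := (Real.summable_pow_div_factorial (‖z‖ * (F * μ.real Set.univ * A))).abs
    have h2 := (Real.summable_pow_div_factorial (‖z‖ * (μ.real Set.univ * A))).abs
    have h3 := (h1.mul_of_nonneg h2 (fun _ => abs_nonneg _) (fun _ => abs_nonneg _)).mul_right
      |A ^ s.length|
    refine Summable.of_norm_bounded h3 fun p => ?_
    have := mul_le_mul_of_nonneg_left (G_bound μ hf hA z p.1 p.2 s)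
      (norm_nonneg (z ^ p.1 / (p.1.factorial : ℂ)))
    rw [← norm_mul] at this
    refine this.trans ?_
    refine (le_abs_self _).trans (le_of_eq ?_)
    rw [← abs_mul, ← abs_mul]
    congr 1
    rw [norm_div, norm_pow, Complex.norm_natCast, mul_pow ‖z‖ (F * _ * A)]
    ring
  have e1 : ∑' m : ℕ, z ^ m / (m.factorial : ℂ) * Qf μ f g z m s = ∑' p, G p := by
    rw [hG.tsum_prod]
    congr 1
    ext m
    simp only [G, Qf]
    rw [tsum_mul_left]
  rw [e1, ← Finset.HasAntidiagonal.sigmaAntidiagonalEquivProd.tsum_eq G]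
  have hG2 : Summable fun c : (Σ n : ℕ, Finset.HasAntidiagonal.antidiagonal n) =>
      G (Finset.HasAntidiagonal.sigmaAntidiagonalEquivProd c) :=
    Finset.HasAntidiagonal.sigmaAntidiagonalEquivProd.summable_iff.mpr hG
  rw [hG2.tsum_sigma]
  congr 1
  ext k
  rw [tsum_fintype, dop_binom μ hg hf, Finset.mul_sum, ← Finset.sum_coe_sort]
  refine Finset.sum_congr rfl fun p _ => ?_
  obtain ⟨⟨a, b⟩, hp⟩ := p
  rw [Finset.HasAntidiagonal.mem_antidiagonal] at hp
  simp only at hp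
  subst hp
  simp only [Finset.HasAntidiagonal.sigmaAntidiagonalEquivProd_apply, G]
  have h := Nat.add_choose_mul_factorial_mul_factorial a b
  have h' : (((a+b).choose a : ℕ) : ℂ) * a.factorial * b.factorial = (a+b).factorial := by
    rw [Nat.choose_symm_add]
    exact_mod_cast h
  have ha : (a.factorial : ℂ) ≠ 0 := by exact_mod_cast a.factorial_ne_zero
  have hb : (b.factorial : ℂ) ≠ 0 := by exact_mod_cast b.factorial_ne_zero
  have hab : ((a+b).factorial : ℂ) ≠ 0 := by exact_mod_cast (a+b).factorial_ne_zero
  rw [pow_add]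
  field_simp
  rw [← h']
  ring

theorem dop_cons {g : List X → ℂ} (hg : NiceG g) {f : X → ℂ} {F : ℝ} (hf : NiceF f F) (k : ℕ)
    (x : X) (s : List X) :
    (Dop μ f)^[k] g (x :: s) = (Dop μ f)^[k] (fun t => g (x :: t)) s := by
  induction k generalizing s with
  | zero => rfl
  | succ k ih =>
    rw [Function.iterate_succ_apply', Function.iterate_succ_apply']
    unfold Dop
    congr 1
    ext y
    change f y * (Dop μ f)^[k] g (y :: x :: s) = f y * (Dop μ f)^[k] (fun t => g (x :: t)) (y :: s)
    rw [← ih, (hg.iter μ hf k).perm _ _ (List.Perm.swap x y s)]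

theorem dop_mul {g : List X → ℂ} {f : X → ℂ} (k : ℕ) (s : List X) :
    (Dop μ (fun _ => 1))^[k] (fun t => (t.map f).prod * g t) s =
      (s.map f).prod * (Dop μ f)^[k] g s := by
  induction k generalizing s with
  | zero => rfl
  | succ k ih =>
    rw [Function.iterate_succ_apply', Function.iterate_succ_apply']
    conv_lhs => unfold Dop
    conv_rhs => rw [Dop]
    rw [← integral_const_mul]
    congr 1
    ext y
    have := ih (y :: s)
    unfold Dop at this ⊢
    rw [this, List.map_cons, List.prod_cons]
    ring

theorem dop_pi {g : List X → ℂ} (hg : NiceG g) (k : ℕ) :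
    (Dop μ (fun _ => 1))^[k] g [] =
      ∫ v : Fin k → X, g (List.ofFn v) ∂(Measure.pi fun _ => μ) := by
  induction k generalizing g with
  | zero => simp [Measure.real]
  | succ k ih =>
    obtain ⟨c, hc⟩ := hg.bdd
    rw [Function.iterate_succ_apply, ih (hg.dop μ NiceF.one)]
    rw [← ((measurePreserving_piFinSuccAbove (fun _ : Fin (k+1) => μ) 0).symm).integral_comp']
    simp only [MeasurableEquiv.piFinSuccAbove_symm_apply, Fin.insertNthEquiv, Fin.insertNth_zero,
      Equiv.coe_fn_mk]
    rw [integral_prod_symm]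
    · unfold Dop
      simp [List.ofFn_cons]
    · refine Integrable.of_bound (C := c (k+1)) ?_ (Filter.Eventually.of_forall fun p => ?_)
      · have := (hg.meas2 k)
        simpa [List.ofFn_cons] using this.aestronglyMeasurable
      · simpa using hc (List.ofFn (Fin.cons p.1 p.2 : Fin (k+1) → X))

end abstractPart

section weights

theorem boltz_add {β : ℝ} {a b : EReal} (ha : a ≠ ⊥) (hb : b ≠ ⊥) :
    boltz β (a + b) = boltz β a * boltz β b := by
  induction a with
  | bot => exact absurd rfl ha
  | top => simp [boltz, EReal.top_add_of_ne_bot hb]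
  | coe a =>
    induction b with
    | bot => exact absurd rfl hb
    | top => simp [boltz]
    | coe b =>
      have : ((a : EReal) + (b : EReal)) ≠ ⊤ := by
        rw [← EReal.coe_add]; exact EReal.coe_ne_top _
      simp only [boltz, this, EReal.coe_ne_top, if_false, ← Real.exp_add]
      rw [← EReal.coe_add, EReal.toReal_coe, EReal.toReal_coe, EReal.toReal_coe]
      ring_nf

theorem boltz_zero {β : ℝ} : boltz β 0 = 1 := by simp [boltz]

theorem boltz_nonneg {β : ℝ} (t : EReal) : 0 ≤ boltz β t := by
  unfold boltz; split_ifs <;> positivity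

theorem boltz_le {β : ℝ} (hβ : 0 < β) {m : ℝ} {t : EReal} (h : (m : EReal) ≤ t) :
    boltz β t ≤ Real.exp (-β * m) := by
  unfold boltz
  split_ifs with ht
  · positivity
  · have hb : t ≠ ⊥ := fun hb => by simp [hb] at h
    lift t to ℝ using ⟨ht, hb⟩
    simp only [EReal.toReal_coe, Real.exp_le_exp]
    have : m ≤ t := by exact_mod_cast h
    nlinarith

theorem boltz_sum {β : ℝ} {ι : Type*} (S : Finset ι) (a : ι → EReal) (ha : ∀ i, a i ≠ ⊥) :
    (∑ i ∈ S, a i) ≠ ⊥ ∧ boltz β (∑ i ∈ S, a i) = ∏ i ∈ S, boltz β (a i) := by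
  classical
  induction S using Finset.induction_on with
  | empty => simp [boltz_zero]
  | insert i S hi ih =>
    rw [Finset.sum_insert hi, Finset.prod_insert hi]
    refine ⟨?_, ?_⟩
    · rw [Ne, EReal.add_eq_bot_iff]; simp [ha i, ih.1]
    · rw [boltz_add (ha i) ih.1, ih.2]

variable {X : Type*}

/-- interaction factor of a point with a list -/
def Mr (b : X → X → ℝ) (x : X) (s : List X) : ℝ := (s.map (b x)).prod

def Wr (b : X → X → ℝ) : List X → ℝ
  | [] => 1
  | x :: s => Mr b x s * Wr b s

theorem Mr_cons (b : X → X → ℝ) (x y : X) (s : List X) : Mr b x (y :: s) = b x y * Mr b x s := by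
  simp [Mr]

theorem Mr_perm (b : X → X → ℝ) (x : X) {s t : List X} (h : s.Perm t) : Mr b x s = Mr b x t :=
  (h.map _).prod_eq

theorem Wr_perm (b : X → X → ℝ) (hb : ∀ x y, b x y = b y x) {s t : List X} (h : s.Perm t) :
    Wr b s = Wr b t := by
  induction h with
  | nil => rfl
  | cons x h ih => simp only [Wr]; rw [ih, Mr_perm b x h]
  | swap x y l => simp only [Wr, Mr_cons]; rw [hb y x]; ring
  | trans _ _ h1 h2 => exact h1.trans h2

def picks : List X → List (X × List X)
  | [] => []
  | x :: l => (x, l) :: (picks l).map (fun p => (p.1, x :: p.2))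

theorem picks_perm (s : List X) (p : X × List X) (hp : p ∈ picks s) : s.Perm (p.1 :: p.2) := by
  induction s generalizing p with
  | nil => simp [picks] at hp
  | cons x l ih =>
    simp only [picks, List.mem_cons, List.mem_map] at hp
    rcases hp with rfl | ⟨q, hq, rfl⟩
    · rfl
    · exact ((ih q hq).cons x).trans (List.Perm.swap _ _ _)

theorem picks_fst (s : List X) : (picks s).map Prod.fst = s := by
  induction s with
  | nil => rfl
  | cons x l ih => simpa [picks, Function.comp_def] using ih

theorem picks_prod (b : X → X → ℝ) (hb : ∀ x y, b x y = b y x) (s : List X) :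
    ((picks s).map (fun p => Mr b p.1 p.2)).prod = Wr b s ^ 2 := by
  induction s with
  | nil => simp [picks, Wr]
  | cons x l ih =>
    simp only [picks, List.map_cons, List.prod_cons, List.map_map, Function.comp_def, Mr_cons, Wr]
    rw [List.prod_map_mul, ih]
    have : (List.map (fun p : X × List X => b p.1 x) (picks l)).prod = Mr b x l := by
      conv_rhs => rw [← picks_fst l]
      simp only [Mr, List.map_map, Function.comp_def, hb x]
    rw [this]
    ring

theorem list_prod_lt (L : List ℝ) (c : ℝ) (hc : 0 < c) (h : ∀ a ∈ L, c < a) :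
    c ^ L.length ≤ L.prod ∧ (L ≠ [] → c ^ L.length < L.prod) := by
  induction L with
  | nil => simp
  | cons a L ih =>
    have h1 := (ih fun a ha => h a (List.mem_cons_of_mem _ ha)).1
    have h2 := h a (List.mem_cons_self)
    have : c ^ (a :: L).length < (a :: L).prod := by
      rw [List.length_cons, List.prod_cons, pow_succ']
      have : 0 < c ^ L.length := by positivity
      nlinarith
    exact ⟨this.le, fun _ => this⟩

theorem ruelle (b : X → X → ℝ) (hb : ∀ x y, b x y = b y x) (A : ℝ) (hA : 0 < A)
    (h0 : ∀ s, 0 ≤ Wr b s)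
    (hW : ∀ s, Wr b s ≤ A ^ s.length) (s : List X) (hs : s ≠ []) :
    ∃ x t, s.Perm (x :: t) ∧ Mr b x t ≤ A ^ 2 := by
  by_contra! hcon
  have h := list_prod_lt ((picks s).map (fun p => Mr b p.1 p.2)) (A^2) (by positivity) (by
    intro a ha
    obtain ⟨p, hp, rfl⟩ := List.mem_map.1 ha
    exact hcon p.1 p.2 (picks_perm s p hp))
  have hl : (picks s).length = s.length := by
    conv_rhs => rw [← picks_fst s, List.length_map]
  have h2 := h.2 (by
    intro h3
    have : ((picks s).map (fun p => Mr b p.1 p.2)).length = 0 := by rw [h3]; rfl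
    rw [List.length_map, hl] at this
    exact hs (List.length_eq_zero_iff.1 this))
  rw [picks_prod b hb, List.length_map, hl, ← pow_mul, mul_comm 2, pow_mul] at h2
  have := pow_le_pow_left₀ (h0 s) (hW s) 2
  linarith

theorem Mr_nonneg (b : X → X → ℝ) (hb : ∀ x y, 0 ≤ b x y) (x : X) (s : List X) : 0 ≤ Mr b x s :=
  List.prod_nonneg (by simp only [List.mem_map]; rintro _ ⟨y, _, rfl⟩; exact hb x y)

theorem Wr_nonneg (b : X → X → ℝ) (hb : ∀ x y, 0 ≤ b x y) (s : List X) : 0 ≤ Wr b s := by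
  induction s with
  | nil => simp [Wr]
  | cons x s ih => exact mul_nonneg (Mr_nonneg b hb x s) ih

theorem Mr_ofFn (b : X → X → ℝ) (x : X) {k : ℕ} (v : Fin k → X) :
    Mr b x (List.ofFn v) = ∏ i, b x (v i) := by
  simp [Mr, List.map_ofFn, List.prod_ofFn]

theorem Wr_meas [MeasurableSpace X] (b : X → X → ℝ)
    (hb : Measurable (fun p : X × X => b p.1 p.2)) (k : ℕ) :
    Measurable (fun v : Fin k → X => Wr b (List.ofFn v)) := by
  induction k with
  | zero => simp
  | succ k ih =>
    simp only [List.ofFn_succ, Wr, Mr_ofFn]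
    refine Measurable.mul (Finset.measurable_prod _ fun i _ => ?_) ?_
    · have h : Measurable (fun v : Fin (k+1) → X => (v 0, v i.succ)) :=
        (measurable_pi_apply 0).prodMk (measurable_pi_apply i.succ)
      exact hb.comp h
    · exact ih.comp (measurable_pi_iff.2 fun i => measurable_pi_apply i.succ)

theorem boltz_Ham {d : ℕ} (β : ℝ) (u : (Fin d → ℝ) → EReal) (hbot : ∀ x, u x ≠ ⊥) (k : ℕ)
    (v : Fin k → Fin d → ℝ) :
    boltz β (Ham u k v) = Wr (fun x y => boltz β (u (x - y))) (List.ofFn v) := by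
  induction k with
  | zero => simp [Ham, boltz_zero, Wr]
  | succ k ih =>
    have h : Ham u (k+1) v = ∑ j : Fin k, u (v 0 - v j.succ) + Ham u k (fun i => v i.succ) := by
      simp only [Ham, Finset.sum_filter, Fintype.sum_prod_type]
      rw [Fin.sum_univ_succ]
      congr 1
      · rw [Fin.sum_univ_succ]
        simp
      · refine Finset.sum_congr rfl fun i _ => ?_
        rw [Fin.sum_univ_succ]
        simp
    have h1 : Ham u k (fun i => v i.succ) ≠ ⊥ := (boltz_sum (β := β) _ _ fun i => hbot _).1
    rw [h, boltz_add (boltz_sum (β := β) _ _ fun i => hbot _).1 h1, ih, (boltz_sum (β := β) _ _ fun i => hbot _).2]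
    simp only [List.ofFn_succ, Wr, Mr_ofFn]

end weights

section contraction

variable {X : Type*} [MeasurableSpace X] (μ : Measure X) [IsFiniteMeasure μ]

theorem Qf_bound {g : List X → ℂ} (hg : NiceG g) {f : X → ℂ} {F : ℝ} (hf : NiceF f F) {A : ℝ}
    (hA : ∀ s, ‖g s‖ ≤ A ^ s.length) (z : ℂ) {M ζ C : ℝ} (hM : 0 ≤ M) (hζ : 0 ≤ ζ)
    (hC : ∫ y, ‖f y‖ ∂μ ≤ C)
    (hP : ∀ s, ‖Qf μ f g z 0 s‖ ≤ M * ζ ^ s.length) (m : ℕ) (s : List X) :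
    ‖Qf μ f g z m s‖ ≤ M * ζ ^ s.length * (C * ζ) ^ m := by
  induction m generalizing s with
  | zero => simpa using hP s
  | succ m ih =>
    have hC0 : 0 ≤ C := (integral_nonneg fun y => norm_nonneg _).trans hC
    have hfi : Integrable f μ :=
      Integrable.of_bound hf.meas.aestronglyMeasurable F (Filter.Eventually.of_forall hf.bdd)
    rw [Qf_succ μ hg hf hA]
    have h1 := norm_integral_le_of_norm_le (μ := μ)
      (f := fun y => f y * Qf μ f g z m (y :: s))
      (g := fun y => ‖f y‖ * (M * ζ ^ (s.length + 1) * (C * ζ) ^ m))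
      (hfi.norm.mul_const _) (Filter.Eventually.of_forall fun y => by
        rw [norm_mul]
        exact mul_le_mul_of_nonneg_left (ih (y :: s)) (norm_nonneg _))
    rw [integral_mul_const] at h1
    refine h1.trans ((mul_le_mul_of_nonneg_right hC (by positivity)).trans (le_of_eq ?_))
    ring

theorem niceG_W (b : X → X → ℝ) (hsym : ∀ x y, b x y = b y x) (h0 : ∀ x y, 0 ≤ b x y)
    (hmeas : Measurable (fun p : X × X => b p.1 p.2)) {A : ℝ}
    (hW : ∀ s, Wr b s ≤ A ^ s.length) : NiceG (fun s => (Wr b s : ℂ)) :=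
  ⟨fun s t h => by rw [Wr_perm b hsym h],
   fun k => Complex.measurable_ofReal.comp (Wr_meas b hmeas k),
   fun k => A ^ k, fun s => by
    rw [Complex.norm_real, Real.norm_eq_abs, abs_of_nonneg (Wr_nonneg b h0 s)]; exact hW s⟩

theorem KS {g : List X → ℂ} (b : X → X → ℝ) (hgW : g = fun s => (Wr b s : ℂ)) (hg : NiceG g)
    (x : X) {F : ℝ} (hf : NiceF (fun y => (b x y : ℂ) - 1) F)
    {A : ℝ} (hA : ∀ s, ‖g s‖ ≤ A ^ s.length) (z : ℂ) (f' : X → ℂ) (s : List X) :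
    Qf μ f' g z 0 (x :: s) = (Mr b x s : ℂ) *
      ∑' m : ℕ, z ^ m / (m.factorial : ℂ) * Qf μ (fun y => (b x y : ℂ) - 1) g z m s := by
  rw [← exp_lemma μ hg hf hA, ← tsum_mul_left]
  unfold Qf
  congr 1
  ext k
  rw [Function.iterate_zero, id, dop_cons μ hg NiceF.one]
  have hcast : ∀ t : List X, (Mr b x t : ℂ) = (t.map (fun y => (b x y : ℂ))).prod := by
    intro t
    induction t with
    | nil => simp [Mr]
    | cons y t ih => rw [Mr_cons, Complex.ofReal_mul, ih, List.map_cons, List.prod_cons]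
  have h1 : (fun t => g (x :: t)) = fun t => (t.map (fun y => (b x y : ℂ))).prod * g t := by
    ext t
    rw [hgW]
    simp only [Wr, Complex.ofReal_mul, hcast]
  have h2 : (s.map (fun y => (b x y : ℂ))).prod = (Mr b x s : ℂ) :=
    (hcast s).symm
  rw [h1, dop_mul, h2]
  simp only [add_sub_cancel]
  ring

theorem nonvanish (b : X → X → ℝ) (hsym : ∀ x y, b x y = b y x) (h0 : ∀ x y, 0 ≤ b x y)
    (hmeas : Measurable (fun p : X × X => b p.1 p.2)) {b0 : ℝ} (hb0 : ∀ x y, b x y ≤ b0)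
    {A : ℝ} (hA1 : 1 ≤ A) (hW : ∀ s, Wr b s ≤ A ^ s.length)
    {C : ℝ} (hC : ∀ x, ∫ y, |b x y - 1| ∂μ ≤ C) (z : ℂ)
    (hz : ‖z‖ * (A ^ 2 * Real.exp 1 * C) < 1) :
    ∑' k : ℕ, z ^ k / (k.factorial : ℂ) *
      (Dop μ (fun _ => 1))^[k] (fun s => (Wr b s : ℂ)) [] ≠ 0 := by
  intro hzero
  obtain ⟨g, hgW⟩ : ∃ g : List X → ℂ, g = fun s => (Wr b s : ℂ) := ⟨_, rfl⟩
  rw [← hgW] at hzero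
  have hg : NiceG g := hgW ▸ niceG_W b hsym h0 hmeas hW
  have hA : ∀ s, ‖g s‖ ≤ A ^ s.length := fun s => by
    rw [hgW]
    simp only [Complex.norm_real, Real.norm_eq_abs, abs_of_nonneg (Wr_nonneg b h0 s)]
    exact hW s
  have hf : ∀ x, NiceF (fun y => (b x y : ℂ) - 1) (b0 + 1) := fun x => by
    refine ⟨(Complex.measurable_ofReal.comp (hmeas.comp measurable_prodMk_left)).sub_const 1,
      fun y => ?_⟩
    refine (norm_sub_le _ _).trans ?_
    rw [Complex.norm_real, Real.norm_eq_abs, abs_of_nonneg (h0 x y), norm_one]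
    linarith [hb0 x y]
  -- the resummed function
  obtain ⟨P, hP⟩ : ∃ P : List X → ℂ, P = fun s => ∑' k : ℕ, z ^ k / (k.factorial : ℂ) *
      (Dop μ (fun _ => 1))^[k] g s := ⟨_, rfl⟩
  have hPQ : ∀ f s, Qf μ f g z 0 s = P s := fun f s => by rw [hP]; rfl
  have hPnil : P [] = 0 := by rw [hP]; exact hzero
  have hPperm : ∀ s t : List X, s.Perm t → P s = P t := fun s t h => by
    rw [hP]
    simp only
    congr 1
    ext k
    rw [(hg.iter μ NiceF.one k).perm s t h]
  obtain ⟨ζ, hζ⟩ : ∃ ζ, ζ = A ^ 2 * Real.exp 1 := ⟨_, rfl⟩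
  have hA0 : 0 < A := by linarith
  have hζ0 : 0 < ζ := by rw [hζ]; positivity
  have hAζ : A ≤ ζ := by
    rw [hζ]
    have : 1 ≤ Real.exp 1 := Real.one_le_exp (by norm_num)
    nlinarith [mul_le_mul hA1 this (by norm_num) hA0.le]
  obtain ⟨q, hq⟩ : ∃ q, q = Real.exp (‖z‖ * (ζ * C) - 1) := ⟨_, rfl⟩
  have hq1 : q < 1 := by
    rw [hq, Real.exp_lt_one_iff, hζ]; linarith
  have hq0 : 0 < q := by rw [hq]; positivity
  -- a priori bound
  obtain ⟨M, hM0, hM⟩ : ∃ M : ℝ, 0 ≤ M ∧ ∀ s, ‖P s‖ ≤ M * ζ ^ s.length := by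
    refine ⟨∑' l : ℕ, (‖z‖ * (μ.real Set.univ * A)) ^ l / l.factorial,
      tsum_nonneg fun l => by positivity, fun s => ?_⟩
    rw [hP]
    have hs := Real.summable_pow_div_factorial (‖z‖ * (μ.real Set.univ * A))
    refine (tsum_of_norm_bounded (hs.mul_right (A ^ s.length)).hasSum fun l => ?_).trans ?_
    · simpa using G_bound μ (NiceF.one (X := X)) hA z 0 l s
    · rw [tsum_mul_right]
      refine mul_le_mul_of_nonneg_left ?_ (tsum_nonneg fun l => by positivity)
      exact pow_le_pow_left₀ hA0.le hAζ _
  have step : ∀ n : ℕ, ∀ s, ‖P s‖ ≤ (q ^ n * M) * ζ ^ s.length := by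
    intro n
    induction n with
    | zero => simpa using hM
    | succ n ih =>
      intro s
      by_cases hs : s = []
      · subst hs
        rw [hPnil, norm_zero]
        positivity
      obtain ⟨x, t, hst, hx⟩ := ruelle b hsym A hA0 (Wr_nonneg b h0) hW s hs
      rw [hPperm _ _ hst, hst.length_eq, ← hPQ (fun _ => 0), KS μ b hgW hg x (hf x) hA, norm_mul,
        Complex.norm_real, Real.norm_eq_abs, abs_of_nonneg (Mr_nonneg b h0 x t)]
      have hQ := Qf_bound μ hg (hf x) hA z (M := q ^ n * M) (ζ := ζ) (C := C) (by positivity)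
        hζ0.le (by
          refine le_trans (le_of_eq ?_) (hC x)
          congr 1
          ext y
          rw [← Complex.ofReal_one, ← Complex.ofReal_sub, Complex.norm_real, Real.norm_eq_abs])
        (fun s => by rw [hPQ]; exact ih s)
      have hsum : ‖∑' m : ℕ, z ^ m / (m.factorial : ℂ) *
          Qf μ (fun y => (b x y : ℂ) - 1) g z m t‖ ≤
          Real.exp (‖z‖ * (ζ * C)) * (q ^ n * M * ζ ^ t.length) := by
        have he : HasSum (fun m : ℕ => (‖z‖ * (ζ * C)) ^ m / m.factorial)
            (Real.exp (‖z‖ * (ζ * C))) := by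
          rw [Real.exp_eq_exp_ℝ]
          exact NormedSpace.expSeries_div_hasSum_exp _
        refine tsum_of_norm_bounded (he.mul_right _) fun m => ?_
        rw [norm_mul, norm_div, norm_pow, Complex.norm_natCast]
        refine (mul_le_mul_of_nonneg_left (hQ m t) (by positivity)).trans (le_of_eq ?_)
        rw [mul_pow ‖z‖, mul_comm C ζ]
        ring
      refine (mul_le_mul hx hsum (norm_nonneg _) (by positivity)).trans (le_of_eq ?_)
      have he : Real.exp (‖z‖ * (ζ * C)) * A ^ 2 = q * ζ := by
        rw [hq, Real.exp_sub]
        have : Real.exp 1 ≠ 0 := (Real.exp_pos 1).ne'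
        rw [div_mul_eq_mul_div, eq_div_iff this]
        linear_combination -Real.exp (‖z‖ * (ζ * C)) * hζ
      rw [List.length_cons, pow_succ, pow_succ]
      linear_combination (q ^ n * M * ζ ^ t.length) * he
  have hPzero : ∀ s, P s = 0 := by
    intro s
    rw [← norm_le_zero_iff]
    have hl : Filter.Tendsto (fun n : ℕ => (q ^ n * M) * ζ ^ s.length) Filter.atTop (nhds 0) := by
      have := ((tendsto_pow_atTop_nhds_zero_of_lt_one hq0.le hq1).mul_const M).mul_const
        (ζ ^ s.length)
      simpa using this
    exact ge_of_tendsto' hl fun n => step n s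
  -- now use `f = -1`
  have hf1 : NiceF (fun _ : X => (-1 : ℂ)) 1 := ⟨measurable_const, by simp⟩
  have hQ0 : ∀ m s, Qf μ (fun _ : X => (-1 : ℂ)) g z m s = 0 := by
    intro m
    induction m with
    | zero => intro s; rw [hPQ, hPzero]
    | succ m ih => intro s; rw [Qf_succ μ hg hf1 hA]; simp [ih]
  have h := exp_lemma μ hg hf1 hA z []
  simp only [hQ0, mul_zero, tsum_zero, add_neg_cancel] at h
  rw [tsum_eq_single 0] at h
  · rw [hgW] at h
    simp [Wr] at h
  · intro k hk
    obtain ⟨k, rfl⟩ := Nat.exists_eq_succ_of_ne_zero hk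
    rw [Function.iterate_succ_apply']
    simp [Dop]

end contraction

/-- For a stable and regular pair potential, the grand canonical
partition function `Ξ_Λ(z)` has no zeros in the disk `|z| < z₀ = (e^{2βB+1} C_β(u))⁻¹`,
i.e. whenever `|z| · e^{2βB+1} C_β(u) < 1`. -/
theorem statement0 {d : ℕ} (hd : 1 ≤ d) (β B : ℝ) (hβ : 0 < β) (hB : 0 ≤ B)
    (u : (Fin d → ℝ) → EReal) (hu : IsPairPotential u)
    (hstab : IsStable u B) (hreg : IsRegularPP β u)
    (Λ : Set (Fin d → ℝ)) (hΛb : IsBounded Λ) (hΛm : MeasurableSet Λ)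
    (z : ℂ) (hz : ‖z‖ * (Real.exp (2 * β * B + 1) * Creg β u) < 1) :
    Xi β u Λ z ≠ 0 := by
  obtain ⟨hum, hue, m, hm⟩ := hu
  have hbot : ∀ x, u x ≠ ⊥ := fun x h => by have := hm x; simp [h] at this
  have : IsFiniteMeasure (volume.restrict Λ) :=
    ⟨by rw [Measure.restrict_apply_univ]; exact hΛb.measure_lt_top⟩
  have hbm : Measurable (boltz β) := by
    unfold boltz
    exact Measurable.ite (measurableSet_singleton ⊤) measurable_const
      (Real.measurable_exp.comp (measurable_const.mul measurable_ereal_toReal))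
  have hsym : ∀ x y, boltz β (u (x - y)) = boltz β (u (y - x)) := fun x y => by
    rw [← hue, neg_sub]
  have h0 : ∀ x y, 0 ≤ boltz β (u (x - y)) := fun x y => boltz_nonneg _
  have hmeas : Measurable (fun p : (Fin d → ℝ) × (Fin d → ℝ) => boltz β (u (p.1 - p.2))) :=
    hbm.comp (hum.comp (measurable_fst.sub measurable_snd))
  have hW : ∀ s, Wr (fun x y => boltz β (u (x - y))) s ≤ Real.exp (β * B) ^ s.length := by
    intro s
    have h1 := boltz_Ham β u hbot s.length s.get
    rw [List.ofFn_get] at h1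
    rw [← h1]
    refine (boltz_le hβ (hstab s.length s.get)).trans (le_of_eq ?_)
    rw [← Real.exp_nat_mul]
    congr 1
    ring
  have hC : ∀ x, ∫ y, |boltz β (u (x - y)) - 1| ∂(volume.restrict Λ) ≤ Creg β u := by
    intro x
    have hi : Integrable (fun y => |mayer β u (x - y)|) := (hreg.comp_sub_left x).abs
    have h1 : Creg β u = ∫ y, |mayer β u (x - y)| :=
      (integral_sub_left_eq_self (fun y => |mayer β u y|) volume x).symm
    rw [h1]
    exact setIntegral_le_integral hi (Filter.Eventually.of_forall fun y => abs_nonneg _)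
  have key := nonvanish (volume.restrict Λ) (fun x y => boltz β (u (x - y))) hsym h0 hmeas
    (fun x y => boltz_le hβ (hm _)) (Real.one_le_exp (by positivity : 0 ≤ β * B)) hW hC z (by
      refine lt_of_eq_of_lt ?_ hz
      rw [← Real.exp_nat_mul, ← Real.exp_add]
      congr 3
      push_cast
      ring)
  have hXi : Xi β u Λ z = ∑' k : ℕ, z ^ k / (k.factorial : ℂ) *
      (Dop (volume.restrict Λ) (fun _ => 1))^[k]
        (fun s => (Wr (fun x y => boltz β (u (x - y))) s : ℂ)) [] := by
    unfold Xi
    congr 1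
    ext k
    congr 1
    rw [dop_pi _ (niceG_W _ hsym h0 hmeas hW), ← Measure.restrict_pi_pi, ← integral_complex_ofReal]
    simp only [boltz_Ham β u hbot]
    rfl
  rw [hXi]
  exact key
end

section
/- Let u be a pair potential that is stable with constant B ≥ 0 and regular, let Λ ⊂ ℝ^d be bounded and measurable, and assume Ξ_Λ(z) ≠ 0 for all |z| < z₀. Then for every n ≥ 1, all x_1,…,x_n ∈ Λ and every z ∈ ℂ with 0 < |z| < z₀, the function w ↦ θ_Λ^{(n)}(w; x_1,…,x_n)/w^n is differentiable at z and z^{n+1} · (d/dz)[θ_Λ^{(n)}(z; x_1,…,x_n)/z^n] = ∫_Λ θ_Λ^{(n+1)}(z; x_1,…,x_n, x) dx − θ_Λ^{(n)}(z; x_1,…,x_n) · ∫_Λ θ_Λ^{(1)}(z; x) dx. -/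
open MeasureTheory Bornology

lemma s7_boltz_nonneg (β : ℝ) (t : EReal) : 0 ≤ boltz β t := by
  unfold boltz; split_ifs <;> positivity

lemma s7_boltz_meas (β : ℝ) : Measurable (boltz β) := by
  unfold boltz
  refine Measurable.ite (measurableSet_singleton _) measurable_const ?_
  exact Real.measurable_exp.comp (measurable_const.mul measurable_ereal_toReal)

lemma s7_boltz_le {d : ℕ} {β B : ℝ} (hβ : 0 < β) {u : (Fin d → ℝ) → EReal}
    (hstab : IsStable u B) (n : ℕ) (x : Fin n → (Fin d → ℝ)) :
    boltz β (Ham u n x) ≤ Real.exp (β * B) ^ n := by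
  have h := hstab n x
  unfold boltz
  split_ifs with ht
  · positivity
  · rw [← Real.exp_nat_mul]
    apply Real.exp_le_exp.2
    have h2 : -(B * n) ≤ (Ham u n x).toReal := by
      have := EReal.toReal_le_toReal h (EReal.coe_ne_bot _) ht
      rwa [EReal.toReal_coe] at this
    nlinarith

lemma s7_ham_meas {d : ℕ} {u : (Fin d → ℝ) → EReal} (hu : Measurable u) (n : ℕ) :
    Measurable (Ham u n) := by
  unfold Ham
  refine Finset.measurable_fun_sum _ fun p _ => ?_
  exact hu.comp ((measurable_pi_apply p.1).sub (measurable_pi_apply p.2))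

lemma s7_ham_cast {d : ℕ} (u : (Fin d → ℝ) → EReal) {m m' : ℕ} (h : m = m')
    (v : Fin m' → (Fin d → ℝ)) : Ham u m (v ∘ Fin.cast h) = Ham u m' v := by
  subst h; rfl

/-- The integrals in the numerator of `theta`. -/
noncomputable def s7F {d : ℕ} (β : ℝ) (u : (Fin d → ℝ) → EReal) (Λ : Set (Fin d → ℝ)) (n : ℕ)
    (x : Fin n → (Fin d → ℝ)) (k : ℕ) : ℝ :=
  ∫ y in cube Λ k, boltz β (Ham u (n + k) (Fin.append x y))

/-- The power series in the numerator of `theta`, without `z ^ n`. -/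
noncomputable def s7S {d : ℕ} (β : ℝ) (u : (Fin d → ℝ) → EReal) (Λ : Set (Fin d → ℝ)) (n : ℕ)
    (x : Fin n → (Fin d → ℝ)) (z : ℂ) : ℂ :=
  ∑' k : ℕ, z ^ k / (Nat.factorial k : ℂ) * (s7F β u Λ n x k : ℂ)

lemma s7_theta_eq {d : ℕ} (β : ℝ) (u : (Fin d → ℝ) → EReal) (Λ : Set (Fin d → ℝ)) (n : ℕ)
    (x : Fin n → (Fin d → ℝ)) (z : ℂ) :
    theta β u Λ n z x = (Xi β u Λ z)⁻¹ * (z ^ n * s7S β u Λ n x z) := by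
  unfold theta s7S s7F
  congr 1
  rw [← tsum_mul_left]
  congr 1; ext k
  rw [pow_add]; ring

lemma s7_Xi_eq {d : ℕ} (β : ℝ) (u : (Fin d → ℝ) → EReal) (Λ : Set (Fin d → ℝ))
    (x : Fin 0 → (Fin d → ℝ)) (z : ℂ) :
    Xi β u Λ z = s7S β u Λ 0 x z := by
  unfold Xi s7S s7F
  congr 1; ext k
  congr 3; ext y
  have : Fin.append x y = y ∘ Fin.cast (Nat.zero_add k) := by
    rw [Subsingleton.elim x Fin.elim0, Fin.elim0_append]
  rw [this, s7_ham_cast]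

lemma s7_vol_cube {d : ℕ} (Λ : Set (Fin d → ℝ)) (k : ℕ) :
    volume (cube Λ k) = volume Λ ^ k := by
  unfold cube
  rw [volume_pi_pi]; simp

lemma s7_F_bound {d : ℕ} {β B : ℝ} (hβ : 0 < β) {u : (Fin d → ℝ) → EReal}
    (hstab : IsStable u B) {Λ : Set (Fin d → ℝ)} (hΛ : volume Λ < ⊤) (n : ℕ)
    (x : Fin n → (Fin d → ℝ)) (k : ℕ) :
    |s7F β u Λ n x k| ≤
      Real.exp (β * B) ^ n * (Real.exp (β * B) * volume.real Λ) ^ k := by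
  unfold s7F
  have := norm_setIntegral_le_of_norm_le_const (μ := volume) (s := cube Λ k)
    (f := fun y => boltz β (Ham u (n + k) (Fin.append x y)))
    (C := Real.exp (β * B) ^ (n + k))
    (by rw [s7_vol_cube]; exact ENNReal.pow_lt_top hΛ)
    (fun y _ => by
      rw [Real.norm_of_nonneg (s7_boltz_nonneg _ _)]
      exact s7_boltz_le hβ hstab _ _)
  rw [Real.norm_eq_abs] at this
  refine this.trans (le_of_eq ?_)
  rw [measureReal_def, s7_vol_cube, ENNReal.toReal_pow, pow_add, mul_pow, measureReal_def]
  ring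

lemma s7_F_succ {d : ℕ} {β B : ℝ} (hβ : 0 < β) {u : (Fin d → ℝ) → EReal}
    (hu : Measurable u) (hstab : IsStable u B) {Λ : Set (Fin d → ℝ)} (hΛ : volume Λ < ⊤)
    (n : ℕ) (x : Fin n → (Fin d → ℝ)) (k : ℕ) :
    IntegrableOn (fun y => s7F β u Λ (n + 1) (Fin.snoc x y) k) Λ ∧
      s7F β u Λ n x (k + 1) = ∫ y in Λ, s7F β u Λ (n + 1) (Fin.snoc x y) k := by
  set g : (Fin d → ℝ) × (Fin k → (Fin d → ℝ)) → ℝ := fun p =>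
    boltz β (Ham u (n + (k + 1)) (Fin.append x (Fin.cons p.1 p.2))) with hg
  have hgF : ∀ y, s7F β u Λ (n + 1) (Fin.snoc x y) k = ∫ ys in cube Λ k, g (y, ys) := by
    intro y
    unfold s7F
    congr 1; ext ys
    rw [Fin.append_left_snoc, s7_ham_cast]
  have happ : Measurable fun y : Fin (k+1) → (Fin d → ℝ) => Fin.append x y := by
    refine measurable_pi_iff.2 fun i => ?_
    refine Fin.addCases (fun i => ?_) (fun i => ?_) i
    · simp only [Fin.append_left]; exact measurable_const
    · simp only [Fin.append_right]; exact measurable_pi_apply i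
  have hcons : Measurable fun p : (Fin d → ℝ) × (Fin k → (Fin d → ℝ)) =>
      (Fin.cons p.1 p.2 : Fin (k+1) → (Fin d → ℝ)) := by
    refine measurable_pi_iff.2 fun i => ?_
    refine Fin.cases ?_ (fun i => ?_) i
    · simp only [Fin.cons_zero]; exact measurable_fst
    · simp only [Fin.cons_succ]; exact (measurable_pi_apply i).comp measurable_snd
  have hgm : Measurable g :=
    (s7_boltz_meas β).comp ((s7_ham_meas hu _).comp (happ.comp hcons))
  have hfin : (volume.prod volume) (Λ ×ˢ cube Λ k) < ⊤ := by
    rw [Measure.prod_prod, s7_vol_cube]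
    exact ENNReal.mul_lt_top hΛ (ENNReal.pow_lt_top hΛ)
  have hgi : IntegrableOn g (Λ ×ˢ cube Λ k) (volume.prod volume) := by
    refine IntegrableOn.of_bound hfin hgm.aestronglyMeasurable
      (Real.exp (β * B) ^ (n + (k + 1))) (Filter.Eventually.of_forall fun p => ?_)
    rw [Real.norm_of_nonneg (s7_boltz_nonneg _ _)]
    exact s7_boltz_le hβ hstab _ _
  simp_rw [hgF]
  constructor
  · have h2 := hgi
    rw [IntegrableOn, ← Measure.prod_restrict] at h2
    exact h2.integral_prod_left
  · rw [← setIntegral_prod g hgi]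
    have hmp := volume_preserving_piFinSuccAbove (fun _ : Fin (k+1) => (Fin d → ℝ)) 0
    have h3 := hmp.setIntegral_preimage_emb (MeasurableEquiv.measurableEmbedding _) g
      (Λ ×ˢ cube Λ k)
    refine Eq.trans ?_ h3
    have hset : (MeasurableEquiv.piFinSuccAbove (fun _ : Fin (k+1) => (Fin d → ℝ)) 0) ⁻¹'
        (Λ ×ˢ cube Λ k) = cube Λ (k + 1) := by
      ext y
      simp only [cube, Set.mem_preimage, Set.mem_prod, Set.mem_univ_pi, Fin.forall_fin_succ]
      rfl
    rw [hset]
    unfold s7F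
    congr 1; ext y
    simp only [hg]
    congr 3
    exact (Fin.cons_self_tail y).symm

lemma s7_summable {C r : ℝ} {F : ℕ → ℝ} (hF : ∀ k, |F k| ≤ C * r ^ k) (z : ℂ) :
    Summable fun k : ℕ => z ^ k / (Nat.factorial k : ℂ) * (F k : ℂ) := by
  refine Summable.of_norm_bounded
    ((Real.summable_pow_div_factorial (‖z‖ * r)).mul_left C) fun k => ?_
  rw [norm_mul, norm_div, norm_pow, Complex.norm_natCast, Complex.norm_real, Real.norm_eq_abs]
  calc ‖z‖ ^ k / (k.factorial : ℝ) * |F k| ≤ ‖z‖ ^ k / (k.factorial : ℝ) * (C * r ^ k) := by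
        gcongr; exact hF k
    _ = _ := by rw [mul_pow]; ring

lemma s7_deriv {C r : ℝ} {F : ℕ → ℝ} (hF : ∀ k, |F k| ≤ C * r ^ k) (z : ℂ) :
    HasDerivAt (fun w : ℂ => ∑' k : ℕ, w ^ k / (Nat.factorial k : ℂ) * (F k : ℂ))
      (∑' k : ℕ, z ^ k / (Nat.factorial k : ℂ) * (F (k + 1) : ℂ)) z := by
  set R : ℝ := ‖z‖ + 1 with hR
  have hz : z ∈ Metric.ball (0 : ℂ) R := by simp [hR]
  set b : ℕ → ℝ := fun k => k * R ^ (k - 1) / (k.factorial : ℝ) * (C * r ^ k) with hb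
  set g' : ℕ → ℂ → ℂ := fun k w => k * w ^ (k - 1) / (k.factorial : ℂ) * (F k : ℂ) with hg'
  have hfac : ∀ k : ℕ, ((k + 1).factorial : ℝ) = (k + 1) * k.factorial := by
    intro k; rw [Nat.factorial_succ]; push_cast; ring
  have hbs : Summable b := by
    rw [← summable_nat_add_iff 1]
    refine ((Real.summable_pow_div_factorial (R * r)).mul_left (C * r)).congr fun k => ?_
    simp only [hb, Nat.add_sub_cancel, hfac]
    have : (k.factorial : ℝ) ≠ 0 := by positivity
    have : (k + 1 : ℝ) ≠ 0 := by positivity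
    push_cast
    field_simp
    ring
  have hbound : ∀ k w, w ∈ Metric.ball (0 : ℂ) R → ‖g' k w‖ ≤ b k := by
    intro k w hw
    have hw' : ‖w‖ ≤ R := by simpa using (Metric.mem_ball.1 hw).le
    simp only [hg', hb]
    rw [norm_mul, norm_div, norm_mul, norm_pow, Complex.norm_natCast, Complex.norm_natCast,
      Complex.norm_real, Real.norm_eq_abs]
    gcongr
    exact hF k
  have key := hasDerivAt_tsum_of_isPreconnected (t := Metric.ball (0 : ℂ) R) (y := z)
    (g := fun k w => w ^ k / (Nat.factorial k : ℂ) * (F k : ℂ)) (g' := g')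
    hbs Metric.isOpen_ball (convex_ball _ _).isPreconnected
    (fun k w _ => ((hasDerivAt_pow k w).div_const _).mul_const _) hbound hz
    (s7_summable hF z) hz
  have hsum : Summable fun k => g' k z := Summable.of_norm_bounded hbs fun k => hbound k z hz
  rw [hsum.tsum_eq_zero_add] at key
  refine key.congr_deriv ?_
  simp only [hg', Nat.add_sub_cancel, Nat.factorial_succ]
  simp only [Nat.cast_zero, zero_mul, zero_div, zero_add]
  congr 1; ext k
  have h1 : (k.factorial : ℂ) ≠ 0 := by exact_mod_cast k.factorial_ne_zero
  have h2 : (k + 1 : ℂ) ≠ 0 := by exact_mod_cast k.succ_ne_zero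
  push_cast
  field_simp

lemma s7_S_deriv {d : ℕ} {β B : ℝ} (hβ : 0 < β) {u : (Fin d → ℝ) → EReal}
    (hu : Measurable u) (hstab : IsStable u B) {Λ : Set (Fin d → ℝ)} (hΛ : volume Λ < ⊤)
    (hΛm : MeasurableSet Λ)
    (n : ℕ) (x : Fin n → (Fin d → ℝ)) (z : ℂ) :
    HasDerivAt (s7S β u Λ n x) (∫ y in Λ, s7S β u Λ (n + 1) (Fin.snoc x y) z) z := by
  have h := s7_deriv (s7_F_bound hβ hstab hΛ n x) z
  refine HasDerivAt.congr_deriv (f := s7S β u Λ n x) h ?_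
  unfold s7S
  set r := Real.exp (β * B) * volume.real Λ with hr
  set C := Real.exp (β * B) ^ (n + 1) with hC
  have hint : ∀ k : ℕ, IntegrableOn (fun y => z ^ k / (Nat.factorial k : ℂ) *
      (s7F β u Λ (n + 1) (Fin.snoc x y) k : ℂ)) Λ := fun k =>
    ((s7_F_succ hβ hu hstab hΛ n x k).1.ofReal).const_mul _
  have hnorm : ∀ (k : ℕ) (y : Fin d → ℝ), ‖z ^ k / (Nat.factorial k : ℂ) *
      (s7F β u Λ (n + 1) (Fin.snoc x y) k : ℂ)‖ ≤ C * ((‖z‖ * r) ^ k / (k.factorial : ℝ)) := by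
    intro k y
    have hF := s7_F_bound hβ hstab hΛ (n + 1) (Fin.snoc x y) k
    rw [norm_mul, norm_div, norm_pow, Complex.norm_natCast, Complex.norm_real, Real.norm_eq_abs]
    calc _ ≤ ‖z‖ ^ k / (k.factorial : ℝ) * (C * r ^ k) := by gcongr
      _ = _ := by rw [mul_pow]; ring
  rw [← integral_tsum_of_summable_integral_norm (fun k => hint k)]
  · congr 1; ext k
    rw [(s7_F_succ hβ hu hstab hΛ n x k).2, integral_const_mul, integral_complex_ofReal]
  · refine Summable.of_norm_bounded
      (((Real.summable_pow_div_factorial (‖z‖ * r)).mul_left C).mul_right (volume.real Λ))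
      fun k => ?_
    exact norm_setIntegral_le_of_norm_le_const hΛ fun y _ => by
      rw [norm_norm]; exact hnorm k y

/-- for `0 < |z| < z₀` the function `w ↦ θ_Λ^{(n)}(w;x)/wⁿ` is
differentiable at `z` and
`z^{n+1} (θ_Λ^{(n)}(z;x)/zⁿ)' = ∫_Λ θ_Λ^{(n+1)}(z;x,x') dx' - θ_Λ^{(n)}(z;x) ∫_Λ θ_Λ^{(1)}(z;x') dx'`. -/
theorem statement7 {d : ℕ} (hd : 1 ≤ d) (β B : ℝ) (hβ : 0 < β) (hB : 0 ≤ B)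
    (u : (Fin d → ℝ) → EReal) (hu : IsPairPotential u)
    (hstab : IsStable u B) (hreg : IsRegularPP β u)
    (Λ : Set (Fin d → ℝ)) (hΛb : IsBounded Λ) (hΛm : MeasurableSet Λ)
    (hXi : ∀ w : ℂ, ‖w‖ * (Real.exp (2 * β * B + 1) * Creg β u) < 1 →
      Xi β u Λ w ≠ 0)
    (n : ℕ) (hn : 1 ≤ n) (x : Fin n → (Fin d → ℝ)) (hx : ∀ i, x i ∈ Λ)
    (z : ℂ) (hz0 : z ≠ 0)
    (hz : ‖z‖ * (Real.exp (2 * β * B + 1) * Creg β u) < 1) :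
    ∃ D : ℂ, HasDerivAt (fun w : ℂ => theta β u Λ n w x / w ^ n) D z ∧
      z ^ (n + 1) * D =
        (∫ y in Λ, theta β u Λ (n + 1) z (Fin.snoc x y)) -
          theta β u Λ n z x * ∫ y in Λ, theta β u Λ 1 z (fun _ => y) := by
  have hΛ : volume Λ < ⊤ := hΛb.measure_lt_top
  have hXz : Xi β u Λ z ≠ 0 := hXi z hz
  have hXeq : Xi β u Λ = s7S β u Λ 0 Fin.elim0 := funext fun w => s7_Xi_eq β u Λ _ w
  have hS := s7_S_deriv hβ hu.1 hstab hΛ hΛm n x z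
  have hX := s7_S_deriv hβ hu.1 hstab hΛ hΛm 0 Fin.elim0 z
  rw [← hXeq] at hX
  have hsn : ∀ y : Fin d → ℝ, (Fin.snoc (Fin.elim0 : Fin 0 → (Fin d → ℝ)) y :
      Fin (0 + 1) → (Fin d → ℝ)) = fun _ => y := by
    intro y; ext i : 1
    obtain rfl : i = Fin.last 0 := Subsingleton.elim (α := Fin 1) i (Fin.last 0)
    exact Fin.snoc_last (α := fun _ => Fin d → ℝ) y Fin.elim0
  simp_rw [hsn] at hX
  refine ⟨_, (hS.div hX hXz).congr_of_eventuallyEq ?_, ?_⟩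
  · filter_upwards [isOpen_ne.mem_nhds hz0] with w hw
    have hw' : w ^ n ≠ 0 := pow_ne_zero _ hw
    rw [s7_theta_eq, Pi.div_apply, div_eq_mul_inv, div_eq_mul_inv]
    field_simp
  · simp_rw [s7_theta_eq, integral_const_mul]
    field_simp
    ring
end

section
/- Let β > 0 and let u be a pair potential that is stable with constant B ≥ 0 and regular, and set C = C_β(u) > 0. Let M ≥ 0 and let θ^{(k)} : (ℝ^d)^k → ℂ (k ≥ 1) be measurable functions with |θ^{(k)}(·)| ≤ M·C^{−k} pointwise for every k. Fix n ≥ 2 and x_1,…,x_n ∈ ℝ^d, let i ∈ {1,…,n} be an index with Σ_{j≠i} u(x_j − x_i) ≥ −2B, and let x' denote the (n−1)-tuple obtained from (x_1,…,x_n) by deleting x_i. Then the series Σ_{k≥1} (1/k!) ∫_{(ℝ^d)^k} Π_{j=1}^k f_β(x_i − y_j) · θ^{(n−1+k)}(x', y_1,…,y_k) dy_1⋯dy_k converges absolutely, and | e^{−β Σ_{j≠i} u(x_j − x_i)} ( θ^{(n−1)}(x') + Σ_{k≥1} (1/k!) ∫_{(ℝ^d)^k} Π_{j=1}^k f_β(x_i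 − y_j) · θ^{(n−1+k)}(x', y_1,…,y_k) dy_1⋯dy_k ) | ≤ e^{2βB+1} · C^{1−n} · M. (This is the pointwise form of the operator-norm bound ‖ΠK‖ ≤ e^{2βB+1} C_β(u) for the Kirkwood–Salsburg operator composed with the permutation operator.) -/
open MeasureTheory Bornology

/-- pointwise operator-norm bound `‖ΠK‖ ≤ e^{2βB+1} C_β(u)` for the
Kirkwood–Salsburg operator: if `‖θ^{(k)}‖ ≤ M C^{-k}` for all `k` and `i` is an index
with `Σ_{j≠i} u(x_j - x_i) ≥ -2B` (here `n = m + 2 ≥ 2`, and `x ∘ i.succAbove` is the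
tuple with `x_i` deleted), then the Kirkwood–Salsburg series converges absolutely and
the stated bound `e^{2βB+1} C^{1-n} M = e^{2βB+1} M / C^{m+1}` holds. -/
theorem statement10 {d : ℕ} (hd : 1 ≤ d) (β B : ℝ) (hβ : 0 < β) (hB : 0 ≤ B)
    (u : (Fin d → ℝ) → EReal) (hu : IsPairPotential u)
    (hstab : IsStable u B) (hreg : IsRegularPP β u) (hC : 0 < Creg β u)
    (M : ℝ) (hM : 0 ≤ M)
    (θ : ∀ k : ℕ, (Fin k → (Fin d → ℝ)) → ℂ)
    (hθmeas : ∀ k, Measurable (θ k))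
    (hθbd : ∀ (k : ℕ) (x : Fin k → (Fin d → ℝ)), ‖θ k x‖ ≤ M / Creg β u ^ k)
    (m : ℕ) (x : Fin (m + 2) → (Fin d → ℝ)) (i : Fin (m + 2))
    (hi : ((-(2 * B) : ℝ) : EReal) ≤ ∑ j ∈ Finset.univ.erase i, u (x j - x i)) :
    Summable (fun k : ℕ =>
      ‖(1 / (Nat.factorial (k + 1) : ℂ)) *
        ∫ y : Fin (k + 1) → (Fin d → ℝ),
          (∏ j, ((mayer β u (x i - y j) : ℝ) : ℂ)) *
            θ (m + 1 + (k + 1)) (Fin.append (x ∘ i.succAbove) y)‖) ∧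
    ‖((boltz β (∑ j ∈ Finset.univ.erase i, u (x j - x i)) : ℝ) : ℂ) *
        (θ (m + 1) (x ∘ i.succAbove) +
          ∑' k : ℕ, (1 / (Nat.factorial (k + 1) : ℂ)) *
            ∫ y : Fin (k + 1) → (Fin d → ℝ),
              (∏ j, ((mayer β u (x i - y j) : ℝ) : ℂ)) *
                θ (m + 1 + (k + 1)) (Fin.append (x ∘ i.succAbove) y))‖
      ≤ Real.exp (2 * β * B + 1) * M / Creg β u ^ (m + 1) := by
  set C := Creg β u with hCdef
  set K := M / C ^ (m + 1) with hK
  have hK0 : 0 ≤ K := by positivity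
  have hint : Integrable (fun y => |mayer β u (x i - y)|) := by
    have h : Integrable (mayer β u) := hreg
    exact (h.comp_sub_left (x i)).abs
  have hintC : ∫ y, |mayer β u (x i - y)| = C :=
    integral_sub_left_eq_self (fun y => |mayer β u y|) volume (x i)
  have hI : ∀ k : ℕ, ‖∫ y : Fin (k + 1) → (Fin d → ℝ),
      (∏ j, ((mayer β u (x i - y j) : ℝ) : ℂ)) *
        θ (m + 1 + (k + 1)) (Fin.append (x ∘ i.succAbove) y)‖ ≤ K := by
    intro k
    have h1 : Integrable (fun y : Fin (k + 1) → (Fin d → ℝ) =>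
        (∏ j, |mayer β u (x i - y j)|) * (M / C ^ (m + 1 + (k + 1)))) :=
      (Integrable.fintype_prod (f := fun (_ : Fin (k + 1)) y => |mayer β u (x i - y)|)
        (fun _ => hint)).mul_const _
    refine (norm_integral_le_of_norm_le h1 (Filter.Eventually.of_forall fun y => ?_)).trans ?_
    · rw [norm_mul, norm_prod]
      simp only [Complex.norm_real, Real.norm_eq_abs]
      exact mul_le_mul_of_nonneg_left (hθbd _ _) (Finset.prod_nonneg fun _ _ => abs_nonneg _)
    · rw [integral_mul_const]
      have h2 := integral_fintype_prod_volume_eq_prod (𝕜 := ℝ)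
        (fun (_ : Fin (k + 1)) (y : Fin d → ℝ) => |mayer β u (x i - y)|)
      rw [h2, hintC, Finset.prod_const, Finset.card_univ, Fintype.card_fin, hK]
      apply le_of_eq
      rw [pow_add C (m + 1) (k + 1)]
      field_simp
  have hexp : HasSum (fun k : ℕ => 1 / (Nat.factorial (k + 1) : ℝ)) (Real.exp 1 - 1) := by
    have h := NormedSpace.expSeries_div_hasSum_exp (𝔸 := ℝ) (1 : ℝ)
    rw [← Real.exp_eq_exp_ℝ] at h
    have h' := (hasSum_nat_add_iff' 1).2 h
    simpa using h'
  have hexpK := hexp.mul_right K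
  have hT : ∀ k : ℕ, ‖(1 / (Nat.factorial (k + 1) : ℂ)) *
        ∫ y : Fin (k + 1) → (Fin d → ℝ),
          (∏ j, ((mayer β u (x i - y j) : ℝ) : ℂ)) *
            θ (m + 1 + (k + 1)) (Fin.append (x ∘ i.succAbove) y)‖
        ≤ 1 / (Nat.factorial (k + 1) : ℝ) * K := by
    intro k
    rw [norm_mul, norm_div, norm_one, Complex.norm_natCast]
    exact mul_le_mul_of_nonneg_left (hI k) (by positivity)
  refine ⟨Summable.of_nonneg_of_le (fun _ => norm_nonneg _) hT hexpK.summable, ?_⟩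
  have hS := tsum_of_norm_bounded hexpK hT
  have hb0 : 0 ≤ boltz β (∑ j ∈ Finset.univ.erase i, u (x j - x i)) := by
    unfold boltz; split_ifs <;> positivity
  have hb : boltz β (∑ j ∈ Finset.univ.erase i, u (x j - x i)) ≤ Real.exp (2 * β * B) := by
    generalize (∑ j ∈ Finset.univ.erase i, u (x j - x i)) = t at hi
    unfold boltz
    split_ifs with h
    · positivity
    · have h3 : -(2 * B) ≤ t.toReal := by
        have := EReal.toReal_le_toReal hi (EReal.coe_ne_bot _) h
        rwa [EReal.toReal_coe] at this
      apply Real.exp_le_exp.2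
      nlinarith
  rw [norm_mul, Complex.norm_real, Real.norm_of_nonneg hb0]
  have hA : ‖θ (m + 1) (x ∘ i.succAbove)‖ ≤ K := hθbd _ _
  calc _ ≤ Real.exp (2 * β * B) * (K + (Real.exp 1 - 1) * K) :=
        mul_le_mul hb ((norm_add_le _ _).trans (add_le_add hA hS)) (norm_nonneg _) (by positivity)
    _ = _ := by rw [Real.exp_add, hK]; ring
end

section
/- Let Λ ⊂ ℝ^d be bounded and measurable, n ≥ 1, let j^{(k)} : Λ^k → [0,∞] (k ≥ 0) be measurable functions, each symmetric under permutation of its arguments, and let F : (ℝ^d)^n × M → [0,∞] be measurable, where M denotes the finite multisets of points of ℝ^d. Then Σ_{k=n}^∞ (1/k!) ∫_{Λ^k} [ Σ_{(i_1,…,i_n) pairwise distinct indices in {1,…,k}} F( (y_{i_1},…,y_{i_n}), {y_1,…,y_k} ) ] j^{(k)}(y_1,…,y_k) dy_1⋯dy_k = ∫_{Λ^n} Σ_{k=0}^∞ (1/k!) ∫_{Λ^k} F( (x_1,…,x_n), {x_1,…,x_n} ∪ {y_1,…,y_k} ) j^{(n+k)}(x_1,…,x_n,y_1,…,y_k) dy_1⋯dy_k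 dx_1⋯dx_n, with both sides valued in [0,∞]. -/
open MeasureTheory Bornology

open scoped ENNReal


lemma aux_perm {d : ℕ} (Λ : Set (Fin d → ℝ)) (m : ℕ) (σ : Equiv.Perm (Fin m))
    (G : (Fin m → (Fin d → ℝ)) → ℝ≥0∞) :
    ∫⁻ y in cube Λ m, G (y ∘ σ) = ∫⁻ y in cube Λ m, G y := by
  have h := volume_measurePreserving_piCongrLeft (fun _ : Fin m => (Fin d → ℝ)) σ.symm
  have e : ∀ y : Fin m → (Fin d → ℝ),
      MeasurableEquiv.piCongrLeft (fun _ : Fin m => (Fin d → ℝ)) σ.symm y = y ∘ σ := by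
    intro y
    funext i
    have := MeasurableEquiv.piCongrLeft_apply_apply (β := fun _ : Fin m => (Fin d → ℝ))
      σ.symm y (σ i)
    simpa using this
  have h2 := h.setLIntegral_comp_preimage_emb
    (MeasurableEquiv.measurableEmbedding _) G (cube Λ m)
  rw [← h2]
  have hs : (MeasurableEquiv.piCongrLeft (fun _ : Fin m => (Fin d → ℝ)) σ.symm) ⁻¹' cube Λ m
      = cube Λ m := by
    ext y
    simp only [Set.mem_preimage, e, cube, Set.mem_univ_pi, Function.comp]
    exact ⟨fun h i => by simpa using h (σ.symm i), fun h i => h _⟩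
  rw [hs]
  simp only [e]

lemma aux_append {d : ℕ} (Λ : Set (Fin d → ℝ)) (n k : ℕ)
    (G : (Fin (n + k) → (Fin d → ℝ)) → ℝ≥0∞) (hG : Measurable G) :
    (Measurable fun p : (Fin n → (Fin d → ℝ)) × (Fin k → (Fin d → ℝ)) =>
      G (Fin.append p.1 p.2)) ∧
    ∫⁻ y in cube Λ (n + k), G y =
      ∫⁻ x in cube Λ n, ∫⁻ y in cube Λ k, G (Fin.append x y) := by
  let e1 := MeasurableEquiv.sumPiEquivProdPi (fun _ : Fin n ⊕ Fin k => (Fin d → ℝ))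
  let e2 := MeasurableEquiv.piCongrLeft (fun _ : Fin (n + k) => (Fin d → ℝ)) finSumFinEquiv
  have h1 : MeasurePreserving e1.symm :=
    volume_measurePreserving_sumPiEquivProdPi_symm (fun _ : Fin n ⊕ Fin k => (Fin d → ℝ))
  have h2 : MeasurePreserving e2 :=
    volume_measurePreserving_piCongrLeft (fun _ : Fin (n + k) => (Fin d → ℝ)) finSumFinEquiv
  have h := h2.comp h1
  have e : ∀ p : (Fin n → (Fin d → ℝ)) × (Fin k → (Fin d → ℝ)),
      (e2 ∘ e1.symm) p = Fin.append p.1 p.2 := by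
    intro p
    funext i
    obtain ⟨i, rfl⟩ := finSumFinEquiv.surjective i
    have := MeasurableEquiv.piCongrLeft_apply_apply
      (β := fun _ : Fin (n + k) => (Fin d → ℝ)) finSumFinEquiv (e1.symm p) i
    refine (this).trans ?_
    rcases i with i | i
    · simp only [finSumFinEquiv_apply_left, Fin.append_left]; rfl
    · simp only [finSumFinEquiv_apply_right, Fin.append_right]; rfl
  have hm : Measurable fun p : (Fin n → (Fin d → ℝ)) × (Fin k → (Fin d → ℝ)) =>
      G (Fin.append p.1 p.2) := by
    have := hG.comp h.measurable
    have h4 : (fun p : (Fin n → (Fin d → ℝ)) × (Fin k → (Fin d → ℝ)) =>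
        G (Fin.append p.1 p.2)) = G ∘ (e2 ∘ e1.symm) := by
      funext p
      exact congrArg G (e p).symm
    rw [h4]
    exact this
  refine ⟨hm, ?_⟩
  have h3 := h.setLIntegral_comp_preimage_emb
    (e2.measurableEmbedding.comp e1.symm.measurableEmbedding) G (cube Λ (n + k))
  rw [← h3]
  have hs : (e2 ∘ e1.symm) ⁻¹' cube Λ (n + k) = cube Λ n ×ˢ cube Λ k := by
    ext p
    simp only [Set.mem_preimage, e, cube, Set.mem_univ_pi, Set.mem_prod]
    constructor
    · intro h
      exact ⟨fun i => by simpa using h (Fin.castAdd k i), fun i => by simpa using h (Fin.natAdd n i)⟩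
    · rintro ⟨ha, hb⟩ i
      refine Fin.addCases (fun i => ?_) (fun i => ?_) i
      · simpa using ha i
      · simpa using hb i
  rw [hs]
  simp only [e]
  rw [Measure.volume_eq_prod, ← Measure.prod_restrict]
  exact lintegral_prod _ hm.aemeasurable

lemma aux_ext {n k : ℕ} (ι : Fin n ↪ Fin (n + k)) :
    ∃ σ : Equiv.Perm (Fin (n + k)), ∀ a, σ (Fin.castAdd k a) = ι a := by
  obtain ⟨σ, hσ⟩ := Equiv.Perm.exists_extending_pair (Fin.castAdd k) ι
    (Fin.castAdd_injective n k) ι.injective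
  exact ⟨σ, hσ⟩

/-- reindexing identity underlying the finite-volume GNZ equation.
Here `F` takes an `n`-tuple and a finite multiset of points, `j^{(k)}` are symmetric
measurable kernels, both sides are valued in `[0,∞]`, and the sum over `k ≥ n` (terms
with `k < n` vanish, having no injections `Fin n ↪ Fin k`) of the integrals over `Λ^k`
of the sums over pairwise distinct indices equals the iterated expression. -/
theorem statement15 {d : ℕ} (hd : 1 ≤ d)
    (Λ : Set (Fin d → ℝ)) (hΛb : IsBounded Λ) (hΛm : MeasurableSet Λ)
    (n : ℕ) (hn : 1 ≤ n)
    (j : ∀ k : ℕ, (Fin k → (Fin d → ℝ)) → ℝ≥0∞)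
    (hjmeas : ∀ k, Measurable (j k))
    (hjsymm : ∀ (k : ℕ) (σ : Equiv.Perm (Fin k)) (y : Fin k → (Fin d → ℝ)),
      j k (y ∘ σ) = j k y)
    (F : (Fin n → (Fin d → ℝ)) → Multiset (Fin d → ℝ) → ℝ≥0∞)
    (hF1 : ∀ (k : ℕ) (g : Fin n → Fin k),
      Measurable (fun y : Fin k → (Fin d → ℝ) =>
        F (fun a => y (g a)) (Multiset.map y Finset.univ.val)))
    (hF2 : ∀ k : ℕ,
      Measurable (fun p : (Fin n → (Fin d → ℝ)) × (Fin k → (Fin d → ℝ)) =>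
        F p.1 (Multiset.map p.1 Finset.univ.val + Multiset.map p.2 Finset.univ.val))) :
    ∑' k : ℕ, (Nat.factorial k : ℝ≥0∞)⁻¹ *
        ∫⁻ y in cube Λ k,
          (∑ ι : Fin n ↪ Fin k,
            F (fun a => y (ι a)) (Multiset.map y Finset.univ.val)) * j k y =
      ∫⁻ x in cube Λ n, ∑' k : ℕ, (Nat.factorial k : ℝ≥0∞)⁻¹ *
        ∫⁻ y in cube Λ k,
          F x (Multiset.map x Finset.univ.val + Multiset.map y Finset.univ.val) *
            j (n + k) (Fin.append x y) := by
  have key : ∀ k : ℕ, ((n + k).factorial : ℝ≥0∞)⁻¹ *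
        ∫⁻ y in cube Λ (n + k),
          (∑ ι : Fin n ↪ Fin (n + k),
            F (fun a => y (ι a)) (Multiset.map y Finset.univ.val)) * j (n + k) y =
      ∫⁻ x in cube Λ n, (Nat.factorial k : ℝ≥0∞)⁻¹ *
        ∫⁻ y in cube Λ k,
          F x (Multiset.map x Finset.univ.val + Multiset.map y Finset.univ.val) *
            j (n + k) (Fin.append x y) := by
    intro k
    let G : (Fin (n + k) → (Fin d → ℝ)) → ℝ≥0∞ := fun y =>
      F (fun a => y (Fin.castAdd k a)) (Multiset.map y Finset.univ.val) * j (n + k) y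
    have hG : Measurable G := (hF1 (n + k) (Fin.castAdd k)).mul (hjmeas _)
    obtain ⟨hGm, hGi⟩ := aux_append Λ n k G hG
    have hGa : ∀ (x : Fin n → (Fin d → ℝ)) (y : Fin k → (Fin d → ℝ)),
        G (Fin.append x y) =
          F x (Multiset.map x Finset.univ.val + Multiset.map y Finset.univ.val) *
            j (n + k) (Fin.append x y) := by
      intro x y
      have hm : Multiset.map (Fin.append x y) Finset.univ.val =
          Multiset.map x Finset.univ.val + Multiset.map y Finset.univ.val := by
        simp only [Fin.univ_val_map, Multiset.coe_add, List.ofFn_fin_append]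
      simp only [G, hm, Fin.append_left]
    have hι : ∀ ι : Fin n ↪ Fin (n + k), ∫⁻ y in cube Λ (n + k),
        F (fun a => y (ι a)) (Multiset.map y Finset.univ.val) * j (n + k) y =
        ∫⁻ y in cube Λ (n + k), G y := by
      intro ι
      obtain ⟨σ, hσ⟩ := aux_ext ι
      rw [← aux_perm Λ (n + k) σ G]
      congr 1
      funext y
      have hm : Multiset.map (y ∘ σ) Finset.univ.val = Multiset.map y Finset.univ.val := by
        rw [← Multiset.map_map, Multiset.map_univ_val_equiv]
      simp only [G]
      rw [hm, hjsymm]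
      simp only [Function.comp_apply, hσ]
    simp_rw [Finset.sum_mul]
    rw [lintegral_finsetSum]
    swap
    · exact fun ι _ => (hF1 (n + k) ι).mul (hjmeas _)
    simp_rw [hι, ← hGa]
    rw [lintegral_const_mul _ hGm.lintegral_prod_right', ← hGi]
    rw [Finset.sum_const, nsmul_eq_mul, ← mul_assoc]
    congr 1
    rw [Finset.card_univ, Fintype.card_embedding_eq, Fintype.card_fin, Fintype.card_fin]
    have h := Nat.factorial_mul_descFactorial (Nat.le_add_right n k)
    rw [Nat.add_sub_cancel_left] at h
    rw [← h]
    have hD : (((n + k).descFactorial n : ℕ) : ℝ≥0∞) ≠ 0 := by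
      intro h0
      have := Nat.cast_eq_zero.1 h0
      rw [this] at h
      exact (Nat.factorial_ne_zero _) (by simpa using h.symm)
    push_cast
    rw [ENNReal.mul_inv (Or.inr (ENNReal.natCast_ne_top _)) (Or.inr hD), mul_assoc,
      ENNReal.inv_mul_cancel hD (ENNReal.natCast_ne_top _), mul_one]
  rw [lintegral_tsum]
  · simp_rw [← key]
    refine ((add_right_injective n).tsum_eq ?_).symm
    intro k hk
    by_contra hlt
    apply hk
    have hkn : k < n := by
      by_contra h
      exact hlt ⟨k - n, by simp; omega⟩
    have : IsEmpty (Fin n ↪ Fin k) := ⟨fun ι => by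
      have := Fintype.card_le_of_embedding ι
      simp at this
      omega⟩
    simp
  · intro k
    obtain ⟨hGm, -⟩ := aux_append Λ n k (j (n + k)) (hjmeas _)
    exact (((hF2 k).mul hGm).lintegral_prod_right'.const_mul _).aemeasurable
end
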